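/- arXiv:1112.4561 — 2 statements merged into one kernel-verified Lean document; each statement's English description precedes it below -/
import Mathlib

section
/- Let k be an algebraically closed field of characteristic 0, let V be a finite-dimensional k-vector space, and let Γ be a subgroup of GL(V) acting irreducibly on V. Then End_k(V) is spanned as a k-vector space by the set of semisimple (diagonalizable) elements of Γ. -/
open scoped TensorProduct

/-- An endomorphism of a vector space is *semisimple* (i.e. diagonalizable over an algebraic
closure of the base field) precisely when its minimal polynomial is separable. -/
def IsSemisimpleEnd {k V : Type*} [Field k] [AddCommGroup V] [Module k V]
    (f : Module.End k V) : Prop :=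
  (minpoly k f).Separable

/-- `(G, V)` is weakly adequate if `End_k(V)` is spanned as a `k`-vector space by the
operators `ρ g`, `g ∈ G`, which are semisimple. -/
def WeaklyAdequate {k G V : Type*} [Field k] [Monoid G] [AddCommGroup V] [Module k V]
    (ρ : Representation k G V) : Prop :=
  Submodule.span k {f : Module.End k V | ∃ g : G, IsSemisimpleEnd (ρ g) ∧ ρ g = f} = ⊤

/-- A submodule is `ρ`-invariant if it is stable under every `ρ g`. -/
def IsInvariantSubmodule {k G V : Type*} [CommSemiring k] [Monoid G] [AddCommMonoid V]
    [Module k V] (ρ : Representation k G V) (U : Submodule k V) : Prop :=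
  ∀ g : G, ∀ v ∈ U, ρ g v ∈ U

/-- A representation is irreducible if `V ≠ 0` and the only invariant submodules are `⊥`
and `⊤`. -/
def IsIrreducibleRep {k G V : Type*} [CommSemiring k] [Monoid G] [AddCommMonoid V]
    [Module k V] (ρ : Representation k G V) : Prop :=
  Nontrivial V ∧ ∀ U : Submodule k V, IsInvariantSubmodule ρ U → U = ⊥ ∨ U = ⊤

/-!
By Burnside's theorem `Γ` spans `End k V`, so it suffices that a linear form `f` vanishing on the
semisimple elements of `Γ` vanishes on `Γ`. Otherwise choose `h ∈ Γ` with `f h ≠ 0` having as many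
distinct eigenvalues as possible, say `r`, and let `h = s * u` be its multiplicative Jordan
decomposition and `N` the velocity at `0` of the polynomial curve through the powers of `u`. Let
`G` be the Zariski closure of `Γ`; this curve lies in `G` because an expression
`∑ l, p_l(t) * l ^ n` with polynomials `p_l` that vanishes whenever `t = n` vanishes for all `n`
and `t`.

Having at most `r` eigenvalues amounts to the vanishing of the `(r + 1) × (r + 1)` Gram
determinants of the forms `(p, q) ↦ tr (p(g) q(g))`, so it still holds on `G` wherever `f ≠ 0`, in
particular at almost all points of a curve `h * c(t)` in `G` with `c(0) = 1`. To first order in `t`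
this says that `tr (N * M) = 0` for every velocity `M` of a curve in `G` through `1`. Thus `N`
belongs to the radical of the trace form on a Lie algebra stable under conjugation by `Γ`. That
radical is solvable by Cartan's criterion, so by Lie's theorem and irreducibility `V` is spanned by
its common eigenvectors. The nilpotent element `N` is therefore zero, hence `u = 1` and `h` is
semisimple: a contradiction.
-/

namespace WeaklyAdequate

open Module Polynomial

attribute [local instance] LieRing.ofAssociativeRing

lemma exists_pow_dvd_mul_sub_derivative {k : Type*} [Field k] [CharZero k] {Q : k[X]}
    (hQ : Q.Separable) (D : k[X]) (n : ℕ) :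
    ∃ B, Q ^ (n + 1) ∣ Q * D - derivative (Q ^ 2 * B) := by
  obtain ⟨a, b, hab⟩ := hQ
  induction n with
  | zero => exact ⟨0, by simp⟩
  | succ n ih =>
    obtain ⟨B, E, hE⟩ := ih
    have hn : C ((n : k) + 2) * C ((n : k) + 2)⁻¹ = 1 := by
      rw [← C_mul, mul_inv_cancel₀ (by exact_mod_cast (n + 1).succ_ne_zero), C_1]
    set c := C ((n : k) + 2)⁻¹
    refine ⟨B + Q ^ n * (c * b * E), a * E - derivative (c * b * E), ?_⟩
    have hd : derivative (Q ^ (n + 2)) = C ((n : k) + 2) * Q ^ (n + 1) * derivative Q := by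
      simp [derivative_pow]
    have : Q ^ 2 * (B + Q ^ n * (c * b * E)) = Q ^ 2 * B + Q ^ (n + 2) * (c * b * E) := by ring
    rw [this, derivative_add, derivative_mul (f := Q ^ (n + 2)), hd, sub_add_eq_sub_sub, hE]
    linear_combination (-Q ^ (n + 1) * derivative Q * b * E) * hn - Q ^ (n + 1) * E * hab

lemma sq_dvd_apply_zero_zero_of_det_eq_zero {R : Type*} [CommRing R] [IsDomain R] {π : R}
    (hπ : Prime π) {n : ℕ} {M : Matrix (Fin (n + 1)) (Fin (n + 1)) R} (hM : M.det = 0)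
    (hrow : ∀ j : Fin n, π ∣ M 0 j.succ) (hcol : ∀ i : Fin n, π ∣ M i.succ 0)
    (hminor : ¬ π ∣ (M.submatrix Fin.succ Fin.succ).det) : π ^ 2 ∣ M 0 0 := by
  have hdet (j : Fin n) : π ∣ (M.submatrix Fin.succ j.succ.succAbove).det := by
    obtain ⟨m, rfl⟩ : ∃ m, n = m + 1 := ⟨n - 1, by have := j.2; omega⟩
    rw [Matrix.det_succ_column_zero]
    refine Finset.dvd_sum fun i _ ↦ Dvd.dvd.mul_right (Dvd.dvd.mul_left ?_ _) _
    simpa using hcol i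
  rw [Matrix.det_succ_row_zero, Fin.sum_univ_succ] at hM
  have htail : π ^ 2 ∣ M 0 0 * (M.submatrix Fin.succ Fin.succ).det := by
    rw [eq_neg_of_add_eq_zero_left (a := M 0 0 * _) (by simpa using hM), dvd_neg, sq]
    refine Finset.dvd_sum fun j _ ↦ mul_dvd_mul (Dvd.dvd.mul_left (hrow j) _) (hdet j)
  exact hπ.pow_dvd_of_dvd_mul_right 2 hminor htail

section Irreducible

variable {k G V : Type*} [Field k] [AddCommGroup V] [Module k V] [FiniteDimensional k V]

lemma span_range_eq_top [IsAlgClosed k] [Monoid G] {ρ : Representation k G V}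
    (hρ : IsIrreducibleRep ρ) : Submodule.span k (Set.range ρ) = ⊤ := by
  let A : Subalgebra k (End k V) := Algebra.adjoin k (Set.range ρ)
  have hA : Subalgebra.toSubmodule A = Submodule.span k (Set.range ρ) := by
    rw [Algebra.adjoin_eq_span, ← MonoidHom.coe_mrange, Submonoid.closure_eq]
  have : Nontrivial V := hρ.1
  have : IsSimpleModule A V :=
    isSimpleModule_iff A V |>.mpr
    { exists_pair_ne := ⟨⊥, ⊤, bot_ne_top⟩
      eq_bot_or_eq_top := fun U ↦ by
        have hU : IsInvariantSubmodule ρ (U.restrictScalars k) := fun g v hv ↦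
          U.smul_mem (⟨ρ g, Algebra.subset_adjoin ⟨g, rfl⟩⟩ : A) hv
        simpa using hρ.2 _ hU }
  have schur := IsSimpleModule.algebraMap_end_bijective_of_isAlgClosed k (A := A) (V := V)
  rw [← hA, eq_top_iff]
  intro f _
  let f' : End (End A V) V :=
    { f with
      map_smul' := fun c v ↦ by
        obtain ⟨r, rfl⟩ := schur.2 c
        simp }
  obtain ⟨s, hs⟩ := Module.Finite.fg_top (R := k) (M := V)
  obtain ⟨a, ha⟩ := jacobson_density f' s
  have : f = (a : End k V) := LinearMap.ext_on hs fun v hv ↦ ha v hv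
  exact this ▸ a.2

variable [CharZero k] [IsAlgClosed k] [Group G] {ρ : Representation k G V}
  {R : LieSubalgebra k (End k V)}

lemma exists_common_eigenvector [Nontrivial V] [LieAlgebra.IsSolvable R] :
    ∃ v ≠ (0 : V), ∀ x ∈ R, ∃ c : k, x v = c • v := by
  obtain ⟨χ, hχ⟩ := LieModule.exists_nontrivial_weightSpace_of_isSolvable k R V
  obtain ⟨⟨v, hv⟩, hv0⟩ := exists_ne (0 : LieModule.weightSpace V χ)
  refine ⟨v, by simpa using hv0, fun x hx ↦ ⟨χ ⟨x, hx⟩, ?_⟩⟩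
  exact (LieModule.mem_weightSpace χ v).mp hv ⟨x, hx⟩

lemma span_common_eigenvectors_eq_top (hρ : IsIrreducibleRep ρ) [LieAlgebra.IsSolvable R]
    (hR : ∀ g, ∀ x ∈ R, ρ g * x * ρ g⁻¹ ∈ R) :
    Submodule.span k {v : V | ∀ x ∈ R, ∃ c : k, x v = c • v} = ⊤ := by
  have : Nontrivial V := hρ.1
  refine (hρ.2 _ fun g v hv ↦ ?_).resolve_left fun h ↦ ?_
  · refine Submodule.span_le (p := (Submodule.span k _).comap (ρ g)) |>.mpr
      (fun v hv ↦ Submodule.subset_span fun x hx ↦ ?_) hv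
    obtain ⟨c, hc⟩ := hv _ (hR g⁻¹ x hx)
    have := congr(ρ g $hc)
    exact ⟨c, by simpa using this⟩
  · obtain ⟨v, hv0, hv⟩ := exists_common_eigenvector (V := V) (R := R)
    exact hv0 (Submodule.span_eq_bot.mp h v hv)

lemma eq_zero_of_isNilpotent_of_isSolvable (hρ : IsIrreducibleRep ρ) [LieAlgebra.IsSolvable R]
    (hR : ∀ g, ∀ x ∈ R, ρ g * x * ρ g⁻¹ ∈ R) {x : End k V} (hx : x ∈ R) (hnil : IsNilpotent x) :
    x = 0 := by
  refine LinearMap.ext_on (span_common_eigenvectors_eq_top hρ hR) fun v hv ↦ ?_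
  obtain ⟨c, hc⟩ := hv x hx
  obtain rfl | hv0 := eq_or_ne v 0
  · simp
  have : End.HasEigenvalue x c :=
    End.hasEigenvalue_of_hasEigenvector ⟨End.mem_eigenspace_iff.mpr hc, hv0⟩
  simp [hc, (this.isNilpotent_of_isNilpotent hnil).eq_zero]

end Irreducible

lemma isSolvable_of_trace_mul_eq_zero {k V : Type*} [Field k] [CharZero k] [AddCommGroup V]
    [Module k V] [FiniteDimensional k V] {R : LieSubalgebra k (End k V)}
    (hR : ∀ x ∈ R, ∀ y ∈ R, LinearMap.trace k V (x * y) = 0) : LieAlgebra.IsSolvable R := by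
  let D : LieIdeal k R := LieAlgebra.derivedSeries k R 1
  have hV : LieModule.IsNilpotent D V :=
    LieModule.isNilpotent_derivedSeries_of_traceForm_eq_zero
      (by ext ⟨x, hx⟩ ⟨y, hy⟩; exact hR x hx y hy)
  have hD : LieRing.IsNilpotent D := by
    refine (LieAlgebra.isNilpotent_iff_forall (R := k)).mpr fun x ↦ ?_
    have hx : IsNilpotent (x : End k V) := (LieModule.isNilpotent_iff_forall' (R := k)).mp hV x
    exact LieSubalgebra.isNilpotent_ad_of_isNilpotent_ad (D : LieSubalgebra k R) (x := x) <|
      LieSubalgebra.isNilpotent_ad_of_isNilpotent_ad R (LieAlgebra.ad_nilpotent_of_nilpotent hx)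
  obtain ⟨n, hn⟩ := LieAlgebra.IsSolvable.solvable k D
  refine LieAlgebra.IsSolvable.mk (R := k) (k := n + 1) ?_
  rwa [LieAlgebra.derivedSeries_def, LieAlgebra.derivedSeriesOfIdeal_add,
    ← LieAlgebra.derivedSeries_def k R 1, ← LieIdeal.derivedSeries_eq_bot_iff]

section TraceRadical

variable {k V : Type*} [Field k] [AddCommGroup V] [Module k V]

/-- The radical of the trace form of `V` on a Lie algebra `L` of endomorphisms of `V`. -/
def traceRadical (L : LieSubalgebra k (End k V)) : LieSubalgebra k (End k V) where
  carrier := {x | x ∈ L ∧ ∀ y ∈ L, LinearMap.trace k V (x * y) = 0}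
  add_mem' hx hy := ⟨add_mem hx.1 hy.1, fun z hz ↦ by simp [add_mul, hx.2 z hz, hy.2 z hz]⟩
  zero_mem' := ⟨zero_mem L, by simp⟩
  smul_mem' c x hx := ⟨L.smul_mem c hx.1, fun z hz ↦ by simp [hx.2 z hz]⟩
  lie_mem' {x y} hx hy := by
    refine ⟨L.lie_mem hx.1 hy.1, fun z hz ↦ ?_⟩
    have : LinearMap.trace k V (⁅x, y⁆ * z) = LinearMap.trace k V (x * ⁅y, z⁆) := by
      simp only [Ring.lie_def, sub_mul, mul_sub, map_sub, mul_assoc]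
      rw [LinearMap.trace_mul_comm k y, mul_assoc]
    rw [this, hx.2 _ (L.lie_mem hy.1 hz)]

variable [CharZero k] [FiniteDimensional k V]

instance (L : LieSubalgebra k (End k V)) : LieAlgebra.IsSolvable (traceRadical L) :=
  isSolvable_of_trace_mul_eq_zero fun _ hx _ hy ↦ hx.2 _ hy.1

lemma eq_zero_of_isNilpotent_of_mem_traceRadical [IsAlgClosed k] {G : Type*} [Group G]
    {ρ : Representation k G V} (hρ : IsIrreducibleRep ρ) {L : LieSubalgebra k (End k V)}
    (hL : ∀ g, ∀ x ∈ L, ρ g * x * ρ g⁻¹ ∈ L) {x : End k V} (hx : x ∈ traceRadical L)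
    (hnil : IsNilpotent x) : x = 0 := by
  refine eq_zero_of_isNilpotent_of_isSolvable (R := traceRadical L) hρ
    (fun g y hy ↦ ⟨hL g y hy.1, fun z hz ↦ ?_⟩) hx hnil
  have hz' : ρ g⁻¹ * z * ρ g ∈ L := by simpa using hL g⁻¹ z hz
  rw [mul_assoc, mul_assoc, LinearMap.trace_mul_comm, ← hy.2 _ hz']
  simp only [mul_assoc]

end TraceRadical

section Eigenvalues

variable {k V : Type*} [Field k] [AddCommGroup V] [Module k V] {g : End k V}

lemma maxGenEigenspace_ne_bot (μ : g.Eigenvalues) : g.maxGenEigenspace μ ≠ ⊥ :=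
  End.HasUnifEigenvalue.le le_top μ.2

lemma mapsTo_aeval_maxGenEigenspace (g : End k V) (p : k[X]) (μ : k) :
    Set.MapsTo (aeval g p) (g.maxGenEigenspace μ) (g.maxGenEigenspace μ) :=
  End.mapsTo_maxGenEigenspace_of_comm (by simpa using (Commute.all X p).map (aeval g)) μ

variable [FiniteDimensional k V]

lemma trace_restrict_aeval_maxGenEigenspace (g : End k V) (p : k[X]) (μ : k) :
    LinearMap.trace k _ ((aeval g p).restrict (mapsTo_aeval_maxGenEigenspace g p μ)) =
      finrank k (g.maxGenEigenspace μ) * p.eval μ := by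
  have hmem (q : k[X]) := mapsTo_aeval_maxGenEigenspace g q μ
  obtain ⟨q, hq⟩ := X_sub_C_dvd_sub_C_eval (a := μ) (p := p)
  have hp : (aeval g p).restrict (hmem p) = algebraMap k _ (p.eval μ) +
      (aeval g (X - C μ)).restrict (hmem _) * (aeval g q).restrict (hmem q) := by
    refine LinearMap.ext fun v ↦ Subtype.ext ?_
    simpa using! congr(aeval g $(sub_eq_iff_eq_add'.mp hq) v)
  have hnil : IsNilpotent ((aeval g (X - C μ)).restrict (hmem _)) := by
    simpa using End.isNilpotent_restrict_maxGenEigenspace_sub_algebraMap g μ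
  have hcomm : Commute ((aeval g (X - C μ)).restrict (hmem _)) ((aeval g q).restrict (hmem q)) :=
    LinearMap.restrict_commute ((Commute.all (X - C μ) q).map (aeval g)) _ _
  have htr := LinearMap.isNilpotent_trace_of_isNilpotent (hcomm.isNilpotent_mul_right hnil)
  rw [hp, map_add, htr.eq_zero, add_zero, Algebra.algebraMap_eq_smul_one, map_smul,
    LinearMap.trace_one, smul_eq_mul, mul_comm]

lemma isInternal_maxGenEigenspace [IsAlgClosed k] [DecidableEq k] (g : End k V) :
    DirectSum.IsInternal fun μ : g.Eigenvalues ↦ g.maxGenEigenspace μ := by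
  refine DirectSum.isInternal_submodule_of_iSupIndep_of_iSup_eq_top
    (g.independent_maxGenEigenspace.comp Subtype.val_injective) ?_
  rw [eq_top_iff, ← g.iSup_maxGenEigenspace_eq_top]
  refine iSup_le fun μ ↦ ?_
  by_cases hμ : g.HasEigenvalue μ
  · exact le_iSup (fun μ : g.Eigenvalues ↦ g.maxGenEigenspace μ) ⟨μ, hμ⟩
  · have : g.maxGenEigenspace μ = ⊥ := not_not.mp fun h ↦
      hμ (End.HasUnifEigenvalue.lt zero_lt_one h)
    simp [this]

lemma trace_aeval [IsAlgClosed k] (g : End k V) (p : k[X]) :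
    LinearMap.trace k V (aeval g p) =
      ∑ μ : g.Eigenvalues, finrank k (g.maxGenEigenspace μ) * p.eval (μ : k) := by
  classical
  rw [LinearMap.trace_eq_sum_trace_restrict (isInternal_maxGenEigenspace g) fun μ ↦
    mapsTo_aeval_maxGenEigenspace g p μ]
  exact Finset.sum_congr rfl fun μ _ ↦ trace_restrict_aeval_maxGenEigenspace g p μ

lemma card_eigenvalues_le_finrank (g : End k V) : Fintype.card g.Eigenvalues ≤ finrank k V := by
  choose v hv using fun μ : g.Eigenvalues ↦ End.HasEigenvalue.exists_hasEigenvector μ.2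
  exact (End.eigenvectors_linearIndependent' g (fun μ : g.Eigenvalues ↦ (μ : k))
    Subtype.val_injective v hv).fintype_card_le_finrank

/-- The Gram matrix of the elements `p i (s)` and `q j (s)` of the algebra `k[s]` with respect to
the bilinear form `(x, y) ↦ τ (x * y)`, for `τ` a linear form such as the trace. -/
noncomputable def traceGram {ι S R : Type*} [Ring S] [Algebra k S] [AddCommGroup R] [Module k R]
    (τ : S →ₗ[k] R) (s : S) (p q : ι → k[X]) : Matrix ι ι R :=
  Matrix.of fun i j ↦ τ (aeval s (p i * q j))

variable [IsAlgClosed k] {ι : Type*}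

lemma traceGram_trace_eq_mul (g : End k V) (p q : ι → k[X]) :
    traceGram (LinearMap.trace k V) g p q =
      (Matrix.of fun i (μ : g.Eigenvalues) ↦ (p i).eval (μ : k)) *
        Matrix.of fun (μ : g.Eigenvalues) j ↦ finrank k (g.maxGenEigenspace μ) * (q j).eval (μ : k)
      := by
  ext i j
  simp [traceGram, -map_mul, trace_aeval, Matrix.mul_apply, mul_left_comm]

variable [Fintype ι] [DecidableEq ι]

lemma det_traceGram_eq_zero (h : Fintype.card g.Eigenvalues < Fintype.card ι) (p q : ι → k[X]) :
    (traceGram (LinearMap.trace k V) g p q).det = 0 := by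
  by_contra hdet
  have hrank := Matrix.rank_of_isUnit _
    ((Matrix.isUnit_iff_isUnit_det _).mpr (isUnit_iff_ne_zero.mpr hdet))
  rw [traceGram_trace_eq_mul] at hrank
  exact h.not_ge (hrank ▸ (Matrix.rank_mul_le_left _ _).trans (Matrix.rank_le_card_width _))

variable [CharZero k]

lemma exists_det_traceGram_ne_zero (e : ι ↪ g.Eigenvalues) :
    ∃ p : ι → k[X], (traceGram (LinearMap.trace k V) g p p).det ≠ 0 := by
  classical
  let L (i : ι) : k[X] := Lagrange.basis Finset.univ (fun μ : g.Eigenvalues ↦ (μ : k)) (e i)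
  have hL (i : ι) (μ : g.Eigenvalues) : (L i).eval (μ : k) = if e i = μ then 1 else 0 := by
    split_ifs with h
    · exact h ▸ Lagrange.eval_basis_self Subtype.val_injective.injOn (Finset.mem_univ _)
    · exact Lagrange.eval_basis_of_ne h (Finset.mem_univ _)
  have hdiag : traceGram (LinearMap.trace k V) g L L =
      Matrix.diagonal fun i ↦ (finrank k (g.maxGenEigenspace (e i : g.Eigenvalues)) : k) := by
    ext i j
    simp only [traceGram, Matrix.of_apply, trace_aeval, eval_mul, hL, Matrix.diagonal_apply]
    obtain rfl | hij := eq_or_ne i j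
    · simp
    · simp [hij]
  refine ⟨L, ?_⟩
  rw [hdiag, Matrix.det_diagonal, Finset.prod_ne_zero_iff]
  intro i _
  simpa using maxGenEigenspace_ne_bot (e i)

lemma card_eigenvalues_le_iff {r : ℕ} : Fintype.card g.Eigenvalues ≤ r ↔
    ∀ p : Fin (r + 1) → k[X], (traceGram (LinearMap.trace k V) g p p).det = 0 := by
  refine ⟨fun h p ↦ det_traceGram_eq_zero (by simpa [Nat.lt_succ_iff] using h) p p, fun h ↦ ?_⟩
  by_contra! hr
  obtain ⟨e⟩ : Nonempty (Fin (r + 1) ↪ g.Eigenvalues) :=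
    Function.Embedding.nonempty_of_card_le (by simpa using hr)
  obtain ⟨p, hp⟩ := exists_det_traceGram_ne_zero e
  exact hp (h p)

end Eigenvalues

section Curves

variable {k A : Type*} [Field k] [Ring A] [Algebra k A]

/-- The value at `t` of a polynomial curve `c : A[X]`. The algebra `A` is not assumed to be
commutative: the parameter is central, and `t` is a scalar. -/
noncomputable def evalAt (t : k) : A[X] →ₐ[k] A :=
  eval₂AlgHom (AlgHom.id k A) (algebraMap k A t) fun a ↦ (Algebra.commutes t a).symm

@[simp]
lemma evalAt_C (t : k) (x : A) : evalAt t (C x) = x :=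
  eval₂_C _ _

lemma evalAt_X (t : k) : evalAt t (X : A[X]) = algebraMap k A t :=
  eval₂_X _ _

@[simp]
lemma evalAt_zero (c : A[X]) : evalAt (0 : k) c = c.coeff 0 := by
  simp [evalAt]

lemma evalAt_eq_sum (t : k) (c : A[X]) : evalAt t c = c.sum fun n a ↦ t ^ n • a := by
  change eval₂ _ _ c = _
  simp [eval₂_eq_sum, ← map_pow, ← Algebra.commutes _ (_ : A), ← Algebra.smul_def]

lemma evalAt_aeval (t : k) (c : A[X]) (p : k[X]) :
    evalAt t (aeval c p) = aeval (evalAt t c) p :=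
  (aeval_algHom_apply _ _ _).symm

lemma coeff_zero_aeval (c : A[X]) (p : k[X]) : (aeval c p).coeff 0 = aeval (c.coeff 0) p := by
  simpa only [evalAt_zero] using evalAt_aeval 0 c p

/-- The polynomial obtained from a polynomial curve by applying the linear form `φ` to each
coefficient. -/
noncomputable def mapCoeff (φ : A →ₗ[k] k) : A[X] →ₗ[k] k[X] where
  toFun c := c.sum fun n a ↦ monomial n (φ a)
  map_add' c d := sum_add_index c d _ (by simp) (by simp)
  map_smul' a c := by
    rw [sum_smul_index' _ _ _ (by simp)]
    simp [sum, Finset.smul_sum, smul_monomial]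

@[simp]
lemma coeff_mapCoeff (φ : A →ₗ[k] k) (c : A[X]) (n : ℕ) :
    (mapCoeff φ c).coeff n = φ (c.coeff n) := by
  simp +contextual [mapCoeff, sum_def, coeff_monomial]

lemma eval_mapCoeff (φ : A →ₗ[k] k) (c : A[X]) (t : k) :
    (mapCoeff φ c).eval t = φ (evalAt t c) := by
  simp [mapCoeff, evalAt_eq_sum, sum_def, eval_finsetSum, mul_comm]

lemma coeff_mem_of_infinite {W : Submodule k A} {c : A[X]}
    (hc : {t : k | evalAt t c ∈ W}.Infinite) (n : ℕ) : c.coeff n ∈ W := by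
  by_contra hn
  obtain ⟨φ, hφ, hW⟩ := Submodule.exists_le_ker_of_notMem hn
  have : mapCoeff φ c = 0 := eq_zero_of_infinite_isRoot _ <|
    hc.mono fun t ht ↦ by simpa [IsRoot, eval_mapCoeff] using hW ht
  exact hφ (by simpa using congr(coeff $this n))

lemma apply_coeff_one_aeval {τ : A →ₗ[k] k} (hτ : ∀ x y, τ (x * y) = τ (y * x))
    (c : A[X]) (p : k[X]) :
    τ ((aeval c p).coeff 1) = τ (aeval (c.coeff 0) (derivative p) * c.coeff 1) := by
  suffices h : ∀ y, Commute (c.coeff 0) y → τ ((aeval c p).coeff 1 * y) =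
      τ (aeval (c.coeff 0) (derivative p) * (c.coeff 1 * y)) by
    simpa using h 1 (.one_right _)
  induction p using Polynomial.induction_on with
  | C a => simp [Polynomial.algebraMap_apply]
  | add p q hp hq => intro y hy; simp [add_mul, hp y hy, hq y hy]
  | monomial n a ih =>
    intro y hy
    rw [pow_succ, ← mul_assoc]
    generalize C a * X ^ n = p at ih ⊢
    have hcomm : Commute (c.coeff 0) (aeval (c.coeff 0) (derivative p)) := by
      simpa using (Commute.all X (derivative p)).map (aeval (c.coeff 0))
    have hτy : τ (aeval (c.coeff 0) (derivative p) * (c.coeff 1 * (c.coeff 0 * y))) =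
        τ (c.coeff 0 * (aeval (c.coeff 0) (derivative p) * (c.coeff 1 * y))) := by
      rw [hy.eq, hτ (c.coeff 0)]; noncomm_ring
    have := ih _ ((Commute.refl _).mul_right hy)
    rw [derivative_mul, map_mul (aeval c), mul_coeff_one, coeff_zero_aeval]
    simp only [aeval_X, derivative_X, map_add, map_mul, mul_one, add_mul, mul_assoc] at this ⊢
    rw [this, hτy, ← hcomm.left_comm, add_comm]

section FirstOrder

variable {k V ι : Type*} [Field k] [AddCommGroup V] [Module k V] {c : (End k V)[X]}

lemma X_dvd_mapCoeff_trace_aeval {p : k[X]} (hp : IsNilpotent (aeval (c.coeff 0) p)) :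
    X ∣ mapCoeff (LinearMap.trace k V) (aeval c p) := by
  rw [X_dvd_iff, coeff_mapCoeff, coeff_zero_aeval]
  exact (LinearMap.isNilpotent_trace_of_isNilpotent hp).eq_zero

variable [IsAlgClosed k] [FiniteDimensional k V]

lemma det_traceGram_mapCoeff_trace_eq_zero [Fintype ι] [DecidableEq ι]
    (hc : {t : k | Fintype.card (evalAt t c).Eigenvalues < Fintype.card ι}.Infinite)
    (p q : ι → k[X]) : (traceGram (mapCoeff (LinearMap.trace k V)) c p q).det = 0 := by
  refine eq_zero_of_infinite_isRoot _ (hc.mono fun t ht ↦ ?_)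
  rw [Set.mem_ofPred_eq, IsRoot, ← det_traceGram_eq_zero ht p q, ← coe_evalRingHom,
    RingHom.map_det]
  congr 1
  ext i j
  simp only [traceGram, RingHom.mapMatrix_apply, Matrix.map_apply, Matrix.of_apply,
    coe_evalRingHom, eval_mapCoeff, evalAt_aeval]

variable [CharZero k]

lemma X_sq_dvd_mapCoeff_trace_aeval_mul
    (hc : {t : k | Fintype.card (evalAt t c).Eigenvalues ≤
      Fintype.card (c.coeff 0).Eigenvalues}.Infinite)
    {p q : k[X]} (hp : IsNilpotent (aeval (c.coeff 0) p))
    (hq : IsNilpotent (aeval (c.coeff 0) q)) :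
    X ^ 2 ∣ mapCoeff (LinearMap.trace k V) (aeval c (p * q)) := by
  obtain ⟨L, hL⟩ := exists_det_traceGram_ne_zero
    (Fintype.equivFin (c.coeff 0).Eigenvalues).symm.toEmbedding
  have hnil {p : k[X]} (hp : IsNilpotent (aeval (c.coeff 0) p)) (q : k[X]) :
      IsNilpotent (aeval (c.coeff 0) (p * q)) := by
    rw [map_mul]
    exact ((Commute.all p q).map _).isNilpotent_mul_right hp
  refine sq_dvd_apply_zero_zero_of_det_eq_zero (n := Fintype.card (c.coeff 0).Eigenvalues)
    prime_X (det_traceGram_mapCoeff_trace_eq_zero (by simpa [Nat.lt_succ_iff] using hc)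
      (Fin.cons p L) (Fin.cons q L))
    (fun j ↦ X_dvd_mapCoeff_trace_aeval (hnil hp _))
    (fun i ↦ X_dvd_mapCoeff_trace_aeval (by rw [mul_comm]; exact hnil hq _)) ?_
  rw [X_dvd_iff, ← constantCoeff_apply, RingHom.map_det]
  convert hL using 3
  ext i j
  simp [traceGram, coeff_zero_aeval, -map_mul]

lemma trace_aeval_mul_coeff_one_eq_zero
    (hc : {t : k | Fintype.card (evalAt t c).Eigenvalues ≤
      Fintype.card (c.coeff 0).Eigenvalues}.Infinite)
    {p : k[X]} (hp : IsNilpotent (aeval (c.coeff 0) p)) :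
    LinearMap.trace k V (aeval (c.coeff 0) p * c.coeff 1) = 0 := by
  have hint := Algebra.IsIntegral.isIntegral (R := k) (c.coeff 0)
  obtain ⟨Q, n, hQ, hQm, hmQ⟩ := exists_squarefree_dvd_pow_of_ne_zero (minpoly.ne_zero hint)
  have hQn : aeval (c.coeff 0) (Q ^ n) = 0 :=
    aeval_eq_zero_of_dvd_aeval_eq_zero hmQ (minpoly.aeval _ _)
  obtain ⟨D, rfl⟩ : Q ∣ p := by
    obtain ⟨j, hj⟩ := hp
    exact hQ.isRadical j p (hQm.trans (minpoly.dvd _ _ (by simpa using hj)))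
  -- `p` is replaced by a derivative because `tr (q'(c) * c')` is the derivative of `tr (q(c))`.
  obtain ⟨B, hB⟩ := exists_pow_dvd_mul_sub_derivative (PerfectField.separable_iff_squarefree.2 hQ)
    D n
  have hD : aeval (c.coeff 0) (Q * D) = aeval (c.coeff 0) (derivative (Q * (Q * B))) := by
    rw [← sub_eq_zero, ← map_sub, ← mul_assoc, ← sq]
    exact aeval_eq_zero_of_dvd_aeval_eq_zero ((pow_dvd_pow Q n.le_succ).trans hB) hQn
  have hnil : IsNilpotent (aeval (c.coeff 0) Q) := ⟨n, by simpa using hQn⟩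
  have hdvd := X_sq_dvd_mapCoeff_trace_aeval_mul hc (q := Q * B) hnil
    (by rw [map_mul]; exact ((Commute.all Q B).map _).isNilpotent_mul_right hnil)
  rw [hD, ← apply_coeff_one_aeval (LinearMap.trace_mul_comm k), ← coeff_mapCoeff]
  exact X_pow_dvd_iff.1 hdvd 1 one_lt_two

end FirstOrder

end Curves

section RegularMaps

variable {k A T : Type*} [Field k] [Ring A] [Algebra k A] [FiniteDimensional k A]

/-- The maps `T → A` into a finite-dimensional algebra whose coordinates belong to the algebra `S`
of scalar functions on `T`. -/
def regularMaps (A : Type*) [Ring A] [Algebra k A] [FiniteDimensional k A]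
    (S : Subalgebra k (T → k)) : Subalgebra k (T → A) where
  carrier := {σ | ∀ φ : A →ₗ[k] k, (fun t ↦ φ (σ t)) ∈ S}
  add_mem' hσ hτ φ := by simpa using! S.add_mem (hσ φ) (hτ φ)
  mul_mem' {σ τ} hσ hτ φ := by
    let b := finBasis k A
    have : (fun t ↦ φ ((σ * τ) t)) =
        ∑ i, (fun t ↦ (φ ∘ₗ LinearMap.mulRight k (b i)) (σ t)) * fun t ↦ b.coord i (τ t) := by
      ext t
      conv_lhs => rw [Pi.mul_apply, ← b.sum_repr (τ t), Finset.mul_sum, map_sum]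
      simp [mul_comm]
    rw [this]
    exact S.sum_mem fun i _ ↦ S.mul_mem (hσ _) (hτ _)
  algebraMap_mem' r φ := S.algebraMap_mem (φ (algebraMap k A r))

variable {S : Subalgebra k (T → k)}

lemma const_mem_regularMaps (S : Subalgebra k (T → k)) (a : A) :
    (fun _ ↦ a) ∈ regularMaps A S :=
  fun φ ↦ S.algebraMap_mem (φ a)

lemma det_mem {ι : Type*} [Fintype ι] [DecidableEq ι] {M : T → Matrix ι ι k}
    (hM : ∀ i j, (fun t ↦ M t i j) ∈ S) : (fun t ↦ (M t).det) ∈ S := by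
  let N : Matrix ι ι S := Matrix.of fun i j ↦ ⟨_, hM i j⟩
  convert N.det.2 using 1
  ext t
  exact (((Pi.evalRingHom _ t).comp S.val.toRingHom).map_det N).symm

end RegularMaps

section ZariskiClosure

variable {k A T : Type*} [Field k] [Ring A] [Algebra k A]

/-- The algebra of regular functions on `Aˣ`: the polynomials in the coordinates of `x` and of
`x⁻¹`. -/
def regularFunctions (k A : Type*) [Field k] [Ring A] [Algebra k A] : Subalgebra k (Aˣ → k) :=
  Algebra.adjoin k ((Set.range fun (φ : A →ₗ[k] k) (x : Aˣ) ↦ φ x) ∪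
    Set.range fun (φ : A →ₗ[k] k) (x : Aˣ) ↦ φ ↑x⁻¹)

variable [FiniteDimensional k A]

lemma val_mem_regularMaps :
    (fun x : Aˣ ↦ (x : A)) ∈ regularMaps A (regularFunctions k A) :=
  fun φ ↦ Algebra.subset_adjoin (.inl ⟨φ, rfl⟩)

lemma inv_mem_regularMaps :
    (fun x : Aˣ ↦ (↑x⁻¹ : A)) ∈ regularMaps A (regularFunctions k A) :=
  fun φ ↦ Algebra.subset_adjoin (.inr ⟨φ, rfl⟩)

lemma comp_mem_of_mem_regularFunctions {S : Subalgebra k (T → k)} {σ : T → Aˣ}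
    (hσ : (fun t ↦ (σ t : A)) ∈ regularMaps A S) (hσ' : (fun t ↦ (↑(σ t)⁻¹ : A)) ∈ regularMaps A S)
    {F : Aˣ → k} (hF : F ∈ regularFunctions k A) : (fun t ↦ F (σ t)) ∈ S := by
  induction hF using Algebra.adjoin_induction with
  | mem F hF =>
    obtain ⟨φ, rfl⟩ | ⟨φ, rfl⟩ := hF
    exacts [hσ φ, hσ' φ]
  | algebraMap r => exact S.algebraMap_mem r
  | add F G _ _ hF hG => exact S.add_mem hF hG
  | mul F G _ _ hF hG => exact S.mul_mem hF hG

lemma mul_left_mem_regularFunctions {F : Aˣ → k} (hF : F ∈ regularFunctions k A) (y : Aˣ) :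
    (fun x ↦ F (y * x)) ∈ regularFunctions k A :=
  comp_mem_of_mem_regularFunctions
    (mul_mem (const_mem_regularMaps _ (y : A)) val_mem_regularMaps)
    (by simpa using! mul_mem inv_mem_regularMaps (const_mem_regularMaps _ (↑y⁻¹ : A)))
    hF

lemma mul_right_mem_regularFunctions {F : Aˣ → k} (hF : F ∈ regularFunctions k A) (y : Aˣ) :
    (fun x ↦ F (x * y)) ∈ regularFunctions k A :=
  comp_mem_of_mem_regularFunctions
    (mul_mem val_mem_regularMaps (const_mem_regularMaps _ (y : A)))
    (by simpa using! mul_mem (const_mem_regularMaps _ (↑y⁻¹ : A)) inv_mem_regularMaps)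
    hF

lemma inv_mem_regularFunctions {F : Aˣ → k} (hF : F ∈ regularFunctions k A) :
    (fun x ↦ F x⁻¹) ∈ regularFunctions k A :=
  comp_mem_of_mem_regularFunctions inv_mem_regularMaps
    (by simpa using! val_mem_regularMaps) hF

/-- The Zariski closure in the algebraic group `Aˣ` of a subgroup. -/
def zariskiClosure (k : Type*) {A : Type*} [Field k] [Ring A] [Algebra k A]
    [FiniteDimensional k A] (Γ : Subgroup Aˣ) : Subgroup Aˣ where
  carrier := {x | ∀ F ∈ regularFunctions k A, (∀ g ∈ Γ, F g = 0) → F x = 0}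
  one_mem' _ _ h := h 1 Γ.one_mem
  mul_mem' {_ y} hx hy _ hF h :=
    hx _ (mul_right_mem_regularFunctions hF y) fun g hg ↦
      hy _ (mul_left_mem_regularFunctions hF g) fun _ hg' ↦ h _ (Γ.mul_mem hg hg')
  inv_mem' hx _ hF h := hx _ (inv_mem_regularFunctions hF) fun _ hg ↦ h _ (Γ.inv_mem hg)

lemma le_zariskiClosure (Γ : Subgroup Aˣ) : Γ ≤ zariskiClosure k Γ :=
  fun x hx _ _ h ↦ h x hx

lemma card_eigenvalues_le_of_mem_zariskiClosure {V : Type*} [IsAlgClosed k] [CharZero k]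
    [AddCommGroup V] [Module k V] [FiniteDimensional k V] {Γ : Subgroup (End k V)ˣ}
    {F : (End k V)ˣ → k} (hF : F ∈ regularFunctions k (End k V)) {r : ℕ}
    (hr : ∀ g ∈ Γ, F g ≠ 0 → Fintype.card (g : End k V).Eigenvalues ≤ r)
    {x : (End k V)ˣ} (hx : x ∈ zariskiClosure k Γ) (hFx : F x ≠ 0) :
    Fintype.card (x : End k V).Eigenvalues ≤ r := by
  refine card_eigenvalues_le_iff.2 fun p ↦ (mul_eq_zero.1 ?_).resolve_left hFx
  have hgram (i j) : (fun g : (End k V)ˣ ↦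
      traceGram (LinearMap.trace k V) (g : End k V) p p i j) ∈ regularFunctions k (End k V) := by
    let v : regularMaps (End k V) (regularFunctions k (End k V)) := ⟨_, val_mem_regularMaps⟩
    have hv (g : (End k V)ˣ) : (aeval v (p i * p j)).1 g = aeval (g : End k V) (p i * p j) :=
      (aeval_algHom_apply ((Pi.evalAlgHom k (fun _ ↦ End k V) g).comp
        (regularMaps (End k V) (regularFunctions k (End k V))).val) v _).symm
    simpa only [traceGram, Matrix.of_apply, hv] using! (aeval v (p i * p j)).2 (LinearMap.trace k V)
  refine hx _ (mul_mem hF (det_mem hgram)) fun g hg ↦ ?_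
  obtain h | h := eq_or_ne (F g) 0
  · simp [h]
  · simp [card_eigenvalues_le_iff.1 (hr g hg h) p]

end ZariskiClosure

section ExpPolynomials

variable {k : Type*} [Field k]

/-- The value of the formal exponential polynomial `P = ∑ l, p_l • l`, with polynomial coefficients
`p_l` and bases `l ∈ kˣ`, when the exponent `n` and the argument `t` of the coefficients are
treated as independent: it is `∑ l, p_l(t) * l ^ n`. -/
noncomputable def expPolyEval (n : ℕ) (t : k) : MonoidAlgebra k[X] kˣ →ₐ[k] k :=
  MonoidAlgebra.liftNCAlgHom (aeval t) ((powMonoidHom n).comp (Units.coeHom k)) fun _ _ ↦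
    Commute.all _ _

lemma expPolyEval_single (n : ℕ) (t : k) (l : kˣ) (p : k[X]) :
    expPolyEval n t (.single l p) = p.eval t * l ^ n := by
  simp [expPolyEval, aeval_def, eval₂_eq_eval_map]

lemma expPolyEval_eq_sum (n : ℕ) (t : k) (P : MonoidAlgebra k[X] kˣ) :
    expPolyEval n t P = ∑ l ∈ P.coeff.support, (P.coeff l).eval t * (l : k) ^ n := by
  conv_lhs => rw [← P.sum_coeff_single, map_finsuppSum]
  exact Finset.sum_congr rfl fun l _ ↦ expPolyEval_single n t l _

/-- The shift operator on sequences, whose generalized eigenvectors include the exponential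
polynomials `n ↦ p(n) * μ ^ n`. -/
def shift (k : Type*) [Field k] : End k (ℕ → k) :=
  LinearMap.funLeft k k (· + 1)

lemma shift_sub_smul_pow_apply (μ : k) (f : k → k) (m : ℕ) :
    ((shift k - μ • 1) ^ m) (fun n : ℕ ↦ f n * μ ^ n) =
      fun n : ℕ ↦ (fwdDiff 1)^[m] f n * μ ^ (n + m) := by
  induction m with
  | zero => simp
  | succ m ih =>
    rw [pow_succ', Module.End.mul_apply, ih]
    ext n
    simp only [Function.iterate_succ_apply', fwdDiff, LinearMap.sub_apply, LinearMap.smul_apply,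
      shift, LinearMap.funLeft_apply, End.one_apply, Pi.sub_apply, Pi.smul_apply, smul_eq_mul,
      Nat.cast_succ]
    ring

lemma eval_mul_pow_mem_maxGenEigenspace_shift (μ : k) (p : k[X]) :
    (fun n : ℕ ↦ p.eval (n : k) * μ ^ n) ∈ (shift k).maxGenEigenspace μ := by
  refine End.mem_maxGenEigenspace .. |>.2 ⟨p.natDegree + 1, ?_⟩
  rw [shift_sub_smul_pow_apply μ p.eval, fwdDiff_iter_degree_add_one_eq_zero]
  ext n
  simp

lemma eq_zero_of_expPolyEval_natCast_eq_zero [CharZero k] {P : MonoidAlgebra k[X] kˣ}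
    (hP : ∀ n : ℕ, expPolyEval n (n : k) P = 0) : P = 0 := by
  have hind := (shift k).independent_maxGenEigenspace.comp (Units.val_injective (α := k))
  have hzero (l) (hl : l ∈ P.coeff.support) :
      (fun n : ℕ ↦ (P.coeff l).eval (n : k) * (l : k) ^ n) = 0 := by
    refine (iSupIndep_iff_finsetSum_eq_zero_imp_eq_zero _).1 hind P.coeff.support _
      (fun (l : kˣ) _ ↦ eval_mul_pow_mem_maxGenEigenspace_shift (l : k) (P.coeff l)) ?_ l hl
    ext n
    simpa [expPolyEval_eq_sum] using hP n
  refine MonoidAlgebra.ext (Finsupp.ext fun l ↦ ?_)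
  by_contra hl
  refine hl (eq_zero_of_infinite_isRoot _
    ((Set.infinite_range_of_injective (Nat.cast_injective (R := k))).mono ?_))
  rintro _ ⟨n, rfl⟩
  simpa using congrFun (hzero l (by simpa using hl)) n

/-- The algebra of functions `(n, t) ↦ ∑ l, p_l(t) * l ^ n` attached to exponential polynomials. -/
noncomputable def expPolynomials (k : Type*) [Field k] : Subalgebra k (ℕ × k → k) :=
  (AlgHom.pi fun x ↦ expPolyEval x.1 x.2).range

lemma eval_mul_pow_mem_expPolynomials (p : k[X]) (l : kˣ) :
    (fun x ↦ p.eval x.2 * (l : k) ^ x.1) ∈ expPolynomials k :=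
  ⟨.single l p, funext fun x ↦ expPolyEval_single x.1 x.2 l p⟩

lemma eq_zero_of_mem_expPolynomials [CharZero k] {F : ℕ × k → k} (hF : F ∈ expPolynomials k)
    (h : ∀ n : ℕ, F (n, n) = 0) : F = 0 := by
  obtain ⟨P, rfl⟩ := hF
  rw [eq_zero_of_expPolyEval_natCast_eq_zero h, RingHom.map_zero]

end ExpPolynomials

section UnipotentCurves

variable {k A : Type*} [Field k] [CharZero k] [Ring A] [Algebra k A]

lemma infinite_setOf_natCast {p : k → Prop} (h : ∀ n : ℕ, p n) : {t | p t}.Infinite :=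
  (Set.infinite_range_of_injective (Nat.cast_injective (R := k))).mono
    (Set.range_subset_iff.2 h)

lemma eq_of_evalAt_natCast_eq {c d : A[X]}
    (h : ∀ n : ℕ, evalAt (n : k) c = evalAt (n : k) d) : c = d := by
  refine sub_eq_zero.1 (Polynomial.ext fun n ↦ ?_)
  exact coeff_mem_of_infinite (W := (⊥ : Submodule k A))
    (infinite_setOf_natCast fun n ↦ by simp [h n]) n

lemma exists_evalAt_natCast_eq_pow {ν : A} (hν : IsNilpotent ν) :
    ∃ c : A[X], ∀ n : ℕ, evalAt (n : k) c = (1 + ν) ^ n := by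
  obtain ⟨m, hm⟩ := hν
  refine ⟨∑ i ∈ Finset.range m, C ((i.factorial : k)⁻¹ • ν ^ i) * descPochhammer A i, fun n ↦ ?_⟩
  have hterm (i : ℕ) : evalAt (n : k) (C ((i.factorial : k)⁻¹ • ν ^ i) * descPochhammer A i) =
      ν ^ i * n.choose i := by
    have : evalAt (n : k) (descPochhammer A i) = (n.descFactorial i : A) := by
      rw [← descPochhammer_eval_eq_descFactorial, ← map_natCast (algebraMap k A)]
      rfl
    rw [map_mul, evalAt_C, this, Nat.descFactorial_eq_factorial_mul_choose, Nat.cast_mul,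
      ← map_natCast (algebraMap k A) i.factorial, ← mul_assoc, ← Algebra.commutes,
      ← Algebra.smul_def, smul_smul, mul_inv_cancel₀ (by exact_mod_cast i.factorial_ne_zero),
      one_smul]
  have hlarge (i : ℕ) (hi : i ∉ Finset.range m) : ν ^ i * (n.choose i : A) = 0 := by
    rw [pow_eq_zero_of_le (by simpa using hi) hm, zero_mul]
  have hlarge' (i : ℕ) (hi : i ∉ Finset.range (n + 1)) : ν ^ i * (n.choose i : A) = 0 := by
    rw [Nat.choose_eq_zero_of_lt (by simpa using hi), Nat.cast_zero, mul_zero]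
  rw [map_sum, add_comm, (Commute.one_right ν).add_pow]
  simp only [hterm, one_pow, mul_one]
  rw [Finset.sum_subset (Finset.subset_union_left (s₂ := Finset.range (n + 1)))
      fun i _ ↦ hlarge i,
    Finset.sum_subset (Finset.subset_union_right (s₁ := Finset.range m)) fun i _ ↦ hlarge' i]

lemma exists_units_evalAt_natCast_eq_pow {u : Aˣ} (hu : IsNilpotent (u - 1 : A)) :
    ∃ c : A[X]ˣ, ∀ n : ℕ, evalAt (n : k) c = (u : A) ^ n := by
  have hu' : IsNilpotent (↑u⁻¹ - 1 : A) := by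
    have : (↑u⁻¹ - 1 : A) = -↑u⁻¹ * (u - 1) := by simp [mul_sub, neg_add_eq_sub]
    rw [this]
    exact (((Commute.refl (u : A)).units_inv_left.neg_left).sub_right
      (.one_right _)).isNilpotent_mul_left hu
  obtain ⟨c, hc⟩ := exists_evalAt_natCast_eq_pow (k := k) hu
  obtain ⟨d, hd⟩ := exists_evalAt_natCast_eq_pow (k := k) hu'
  simp only [add_sub_cancel] at hc hd
  refine ⟨⟨c, d, eq_of_evalAt_natCast_eq (k := k) fun n ↦ ?_,
    eq_of_evalAt_natCast_eq (k := k) fun n ↦ ?_⟩, hc⟩ <;>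
  · rw [map_mul, hc, hd, map_one, ← Units.val_pow_eq_pow_val, ← Units.val_pow_eq_pow_val,
      ← Units.val_mul, ← Units.val_one]
    simp only [inv_pow, mul_inv_cancel, inv_mul_cancel]

lemma exists_coeff_one_eq_aeval {ν : A} {c : A[X]}
    (hc : ∀ n : ℕ, evalAt (n : k) c = (1 + ν) ^ n) :
    ∃ q : k[X], c.coeff 1 = aeval ν (X * (1 + X * q)) := by
  let W : Submodule k A :=
    ((Ideal.span {(X ^ 2 : k[X])}).restrictScalars k).map (aeval ν).toLinearMap
  have hW (n : ℕ) : evalAt (n : k) (c - 1 - C ν * X) ∈ W := by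
    have hdvd : (X ^ 2 : k[X]) ∣ (1 + X) ^ n - 1 - C (n : k) * X := by
      refine X_pow_dvd_iff.2 fun i hi ↦ ?_
      interval_cases i <;> simp [coeff_one_add_X_pow, coeff_one]
    refine ⟨_, Ideal.mem_span_singleton.2 hdvd, ?_⟩
    simp [hc, evalAt_X, Nat.cast_comm]
  obtain ⟨p, hp, hpc⟩ := coeff_mem_of_infinite (infinite_setOf_natCast hW) 1
  obtain ⟨q, rfl⟩ := Ideal.mem_span_singleton'.1 hp
  have hq : aeval ν (q * X ^ 2) = c.coeff 1 - ν := by simpa [coeff_one] using hpc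
  exact ⟨q, calc
    c.coeff 1 = aeval ν (q * X ^ 2 + X) := by rw [map_add, hq, aeval_X, sub_add_cancel]
    _ = aeval ν (X * (1 + X * q)) := by ring_nf⟩

lemma coeff_one_mem_adjoin {ν : A} {c : A[X]} (hc : ∀ n : ℕ, evalAt (n : k) c = (1 + ν) ^ n) :
    c.coeff 1 ∈ Algebra.adjoin k {ν} := by
  obtain ⟨q, hq⟩ := exists_coeff_one_eq_aeval hc
  exact hq ▸ aeval_mem_adjoin_singleton k ν

lemma isNilpotent_coeff_one {ν : A} (hν : IsNilpotent ν) {c : A[X]}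
    (hc : ∀ n : ℕ, evalAt (n : k) c = (1 + ν) ^ n) : IsNilpotent (c.coeff 1) := by
  obtain ⟨q, hq⟩ := exists_coeff_one_eq_aeval hc
  rw [hq, map_mul]
  exact ((Commute.all _ _).map _).isNilpotent_mul_right (by rwa [aeval_X])

lemma eq_zero_of_coeff_one_eq_zero {ν : A} (hν : IsNilpotent ν) {c : A[X]}
    (hc : ∀ n : ℕ, evalAt (n : k) c = (1 + ν) ^ n) (h : c.coeff 1 = 0) : ν = 0 := by
  obtain ⟨q, hq⟩ := exists_coeff_one_eq_aeval hc
  have hunit : IsUnit (aeval ν (1 + X * q)) := by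
    rw [map_add, map_one, map_mul]
    exact (((Commute.all _ _).map _).isNilpotent_mul_right (by rwa [aeval_X])).isUnit_one_add
  rwa [hq, map_mul, hunit.mul_left_eq_zero, aeval_X] at h

end UnipotentCurves

section Jordan

lemma val_inv_mem {k A : Type*} [Field k] [Ring A] [Algebra k A] [FiniteDimensional k A]
    {S : Subalgebra k A} {x : Aˣ} (hx : (x : A) ∈ S) : (↑x⁻¹ : A) ∈ S := by
  have : IsArtinianRing S := IsArtinianRing.of_finite k S
  have hreg : IsRegular (⟨x, hx⟩ : S) :=
    ⟨fun a b h ↦ Subtype.ext (x.mul_right_inj.1 congr(($h : A))),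
      fun a b h ↦ Subtype.ext (x.mul_left_inj.1 congr(($h : A)))⟩
  obtain ⟨y, hy⟩ := (IsArtinianRing.isUnit_iff_isRegular.2 hreg).exists_right_inv
  rw [Units.inv_eq_of_mul_eq_one_right congr(($hy : A))]
  exact y.2

variable {k V : Type*} [Field k] [AddCommGroup V] [Module k V] [FiniteDimensional k V]

lemma isSemisimple_inv {s : (End k V)ˣ} (hs : (s : End k V).IsSemisimple) :
    (↑s⁻¹ : End k V).IsSemisimple := by
  have hmem := val_inv_mem (Algebra.self_mem_adjoin_singleton k (s : End k V))
  obtain ⟨p, hp⟩ := Algebra.adjoin_singleton_eq_range_aeval k (s : End k V) ▸ hmem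
  exact hp ▸ hs.aeval p

lemma exists_eq_mul_isSemisimple_unipotent [PerfectField k] (h : (End k V)ˣ) :
    ∃ s u : (End k V)ˣ, h = s * u ∧ Commute s u ∧ (s : End k V).IsSemisimple ∧
      IsNilpotent (u - 1 : End k V) ∧ (u - 1 : End k V) ∈ Algebra.adjoin k {(h : End k V)} := by
  obtain ⟨n, hn, s, hs, hnil, hss, hsum⟩ := (h : End k V).exists_isNilpotent_isSemisimple
  have hhn : Commute (h : End k V) n := Algebra.commute_of_mem_adjoin_self hn
  have hhs : Commute (h : End k V) s := Algebra.commute_of_mem_adjoin_self hs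
  have hsn : Commute s n := Algebra.commute_of_mem_adjoin_singleton_of_commute hn hhs.symm
  obtain ⟨s, rfl⟩ : IsUnit s := by
    rw [eq_sub_of_add_eq' hsum.symm, sub_eq_neg_add]
    exact hnil.neg.isUnit_add_right_of_commute h.isUnit hhn.symm.neg_left
  have hu : (↑(s⁻¹ * h) - 1 : End k V) = ↑s⁻¹ * n := by simp [hsum, mul_add]
  refine ⟨s, s⁻¹ * h, (mul_inv_cancel_left s h).symm,
    (Commute.refl s).inv_right.mul_right (Units.ext hhs.symm.eq), hss, ?_, ?_⟩
  · rw [hu]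
    exact hsn.units_inv_left.isNilpotent_mul_left hnil
  · rw [hu]
    exact mul_mem (val_inv_mem hs) hn

variable [IsAlgClosed k]

lemma aeval_eq_zero_of_isSemisimple {s : End k V} (hs : s.IsSemisimple) {p : k[X]}
    (hp : ∀ μ : s.Eigenvalues, p.eval (μ : k) = 0) : aeval s p = 0 := by
  rw [← LinearMap.ker_eq_top, eq_top_iff, ← hs.iSup_eigenspace_eq_top]
  refine iSup_le fun μ v hv ↦ ?_
  obtain rfl | hv0 := eq_or_ne v 0
  · exact zero_mem _
  · have hμ : s.HasEigenvector μ v := ⟨hv, hv0⟩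
    have hpμ : p.eval μ = 0 := hp ⟨μ, End.hasEigenvalue_of_hasEigenvector hμ⟩
    rw [LinearMap.mem_ker, End.aeval_apply_of_hasEigenvector hμ, hpμ, zero_smul]

lemma exists_pow_eq_sum_eigenvalues {s : End k V} (hs : s.IsSemisimple) :
    ∃ P : s.Eigenvalues → End k V, ∀ n : ℕ, s ^ n = ∑ μ : s.Eigenvalues, (μ : k) ^ n • P μ := by
  classical
  let b : s.Eigenvalues → k[X] := Lagrange.basis Finset.univ fun μ : s.Eigenvalues ↦ (μ : k)
  refine ⟨fun μ ↦ aeval s (b μ), fun n ↦ ?_⟩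
  have h := aeval_eq_zero_of_isSemisimple hs (p := X ^ n -
    Lagrange.interpolate Finset.univ (fun μ : s.Eigenvalues ↦ (μ : k)) fun μ ↦ (μ : k) ^ n)
    fun μ ↦ by
      rw [eval_sub, Lagrange.eval_interpolate_at_node (v := fun μ : s.Eigenvalues ↦ (μ : k)) _
        (fun _ _ _ _ h ↦ Subtype.ext h) (Finset.mem_univ μ), eval_pow, eval_X, sub_self]
  rw [map_sub, map_pow, aeval_X, sub_eq_zero] at h
  simp [h, Lagrange.interpolate_apply, b, Algebra.smul_def]

lemma pow_mem_regularMaps_expPolynomials {s : (End k V)ˣ} (hs : (s : End k V).IsSemisimple) :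
    (fun x : ℕ × k ↦ (s : End k V) ^ x.1) ∈ regularMaps (End k V) (expPolynomials k) := by
  obtain ⟨P, hP⟩ := exists_pow_eq_sum_eigenvalues hs
  intro φ
  have hsum : (fun x : ℕ × k ↦ φ ((s : End k V) ^ x.1)) =
      ∑ μ : (s : End k V).Eigenvalues, fun x ↦ (C (φ (P μ))).eval x.2 * (μ : k) ^ x.1 := by
    ext x
    simp [hP, mul_comm]
  rw [hsum]
  refine sum_mem fun μ _ ↦ ?_
  have hμ : (μ : k) ≠ 0 := spectrum.ne_zero_of_mem_of_unit μ.2.mem_spectrum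
  exact eval_mul_pow_mem_expPolynomials _ (Units.mk0 _ hμ)

end Jordan

section ClosureCurves

variable {k A : Type*} [Field k] [Ring A] [Algebra k A]

lemma evalAt_mem_regularMaps_expPolynomials [FiniteDimensional k A] (c : A[X]) :
    (fun x : ℕ × k ↦ evalAt x.2 c) ∈ regularMaps A (expPolynomials k) := fun φ ↦ by
  simpa [eval_mapCoeff] using eval_mul_pow_mem_expPolynomials (mapCoeff φ c) 1

/-- The value at `t` of an invertible polynomial curve, as a unit. -/
noncomputable abbrev evalUnitsAt (t : k) : A[X]ˣ →* Aˣ :=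
  Units.map ((evalAt t : A[X] →ₐ[k] A) : A[X] →* A)

/-- The polynomial curves, with polynomial inverse, all of whose points lie in `G`. -/
noncomputable def polyCurves (k : Type*) {A : Type*} [Field k] [Ring A] [Algebra k A]
    (G : Subgroup Aˣ) : Subgroup A[X]ˣ :=
  ⨅ t : k, G.comap (evalUnitsAt t)

lemma mem_polyCurves {G : Subgroup Aˣ} {c : A[X]ˣ} :
    c ∈ polyCurves k G ↔ ∀ t : k, evalUnitsAt t c ∈ G := by
  simp [polyCurves, Subgroup.mem_iInf]

lemma mem_polyCurves_zariskiClosure {V : Type*} [IsAlgClosed k] [CharZero k] [AddCommGroup V]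
    [Module k V] [FiniteDimensional k V] {Γ : Subgroup (End k V)ˣ} {s u : (End k V)ˣ}
    (hsu : Commute s u) (hs : (s : End k V).IsSemisimple) (hmem : s * u ∈ Γ) {c : (End k V)[X]ˣ}
    (hc : ∀ n : ℕ, evalAt (n : k) (c : (End k V)[X]) = (u : End k V) ^ n) :
    c ∈ polyCurves k (zariskiClosure k Γ) := by
  refine mem_polyCurves.2 fun t F hF hΓ ↦ ?_
  let σ (x : ℕ × k) : (End k V)ˣ := s ^ x.1 * evalUnitsAt x.2 c
  have hσ : (fun x ↦ F (σ x)) ∈ expPolynomials k := by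
    refine comp_mem_of_mem_regularFunctions ?_ ?_ hF
    · simpa [σ] using! mul_mem (pow_mem_regularMaps_expPolynomials hs)
        (evalAt_mem_regularMaps_expPolynomials (c : (End k V)[X]))
    · simpa [σ] using! mul_mem (evalAt_mem_regularMaps_expPolynomials (↑c⁻¹ : (End k V)[X]))
        (pow_mem_regularMaps_expPolynomials (isSemisimple_inv hs))
  have hdiag (n : ℕ) : σ (n, n) = (s * u) ^ n := Units.ext (by simp [σ, hc, hsu.mul_pow])
  have hzero := eq_zero_of_mem_expPolynomials hσ fun n ↦ by
    simpa only [hdiag] using hΓ _ (Γ.pow_mem hmem n)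
  simpa [σ] using congrFun hzero (0, t)

end ClosureCurves

section TangentLie

variable {k A : Type*} [Field k] [Ring A] [Algebra k A] {G : Subgroup Aˣ}

lemma const_mem_polyCurves {g : Aˣ} (hg : g ∈ G) :
    Units.map ((C : A →+* A[X]) : A →* A[X]) g ∈ polyCurves k G := by
  refine mem_polyCurves.2 fun t ↦ ?_
  convert hg
  exact Units.ext (evalAt_C t (g : A))

/-- The span of the velocities at `1` of the polynomial curves in `G`. It stands in for the Lie
algebra of `G`, of which it contains all the unipotent directions. -/
noncomputable def tangentSpan (k : Type*) {A : Type*} [Field k] [Ring A] [Algebra k A]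
    (G : Subgroup Aˣ) : Submodule k A :=
  Submodule.span k ((fun c : A[X]ˣ ↦ (c : A[X]).coeff 1) ''
    {c | c ∈ polyCurves k G ∧ (c : A[X]).coeff 0 = 1})

lemma conj_mem_tangentSpan {g : Aˣ} (hg : g ∈ G) {x : A} (hx : x ∈ tangentSpan k G) :
    g * x * ↑g⁻¹ ∈ tangentSpan k G := by
  suffices tangentSpan k G ≤ (tangentSpan k G).comap
      (LinearMap.mulRight k (↑g⁻¹ : A) ∘ₗ LinearMap.mulLeft k (g : A)) from this hx
  refine Submodule.span_le.2 ?_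
  rintro _ ⟨c, ⟨hc, hc0⟩, rfl⟩
  have hCg := const_mem_polyCurves (k := k) hg
  have hCg' := const_mem_polyCurves (k := k) (G.inv_mem hg)
  exact Submodule.subset_span ⟨_, ⟨mul_mem (mul_mem hCg hc) hCg', by simp [hc0]⟩, by simp⟩

lemma coeff_zero_inv {c : A[X]ˣ} (hc : (c : A[X]).coeff 0 = 1) :
    (↑c⁻¹ : A[X]).coeff 0 = 1 := by
  simpa [mul_coeff_zero, hc, -Units.mul_inv] using congr(($c.mul_inv).coeff 0)

lemma coeff_one_inv {c : A[X]ˣ} (hc : (c : A[X]).coeff 0 = 1) :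
    (↑c⁻¹ : A[X]).coeff 1 = -(c : A[X]).coeff 1 := by
  refine eq_neg_of_add_eq_zero_left ?_
  simpa [mul_coeff_one, hc, coeff_zero_inv hc, coeff_one, -Units.mul_inv] using
    congr(($c.mul_inv).coeff 1)

lemma lie_mem_tangentSpan [Infinite k] {x y : A} (hx : x ∈ tangentSpan k G)
    (hy : y ∈ tangentSpan k G) : ⁅x, y⁆ ∈ tangentSpan k G := by
  suffices tangentSpan k G ≤ (tangentSpan k G).comap
      (LinearMap.mulRight k y - LinearMap.mulLeft k y) from this hx
  refine Submodule.span_le.2 ?_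
  rintro _ ⟨c, ⟨hc, hc0⟩, rfl⟩
  have hconj : {t : k | evalAt t (c * C y * ↑c⁻¹ : A[X]) ∈ tangentSpan k G}.Infinite :=
    Set.infinite_univ.mono fun t _ ↦ by
      simpa using! conj_mem_tangentSpan (mem_polyCurves.1 hc t) hy
  have := coeff_mem_of_infinite hconj 1
  simpa [mul_coeff_one, hc0, coeff_zero_inv hc0, coeff_one_inv hc0, add_comm, sub_eq_add_neg]
    using this

/-- The Lie algebra structure on `tangentSpan k G`. -/
noncomputable def tangentLie (k : Type*) {A : Type*} [Field k] [Infinite k] [Ring A] [Algebra k A]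
    (G : Subgroup Aˣ) : LieSubalgebra k A where
  __ := tangentSpan k G
  lie_mem' := lie_mem_tangentSpan

end TangentLie

section MaximalEigenvalueCount

lemma infinite_setOf_apply_evalAt_ne_zero {k A : Type*} [Field k] [Infinite k] [Ring A]
    [Algebra k A] {f : A →ₗ[k] k} {c : A[X]} (hc : f (c.coeff 0) ≠ 0) :
    {t : k | f (evalAt t c) ≠ 0}.Infinite := by
  have hne : mapCoeff f c ≠ 0 := fun h ↦ hc (by simpa using congr(coeff $h 0))
  refine (finite_setOfPred_isRoot hne).infinite_compl.mono fun t ht ↦ ?_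
  simpa [IsRoot, eval_mapCoeff] using ht

variable {k V : Type*} [Field k] [IsAlgClosed k] [CharZero k] [AddCommGroup V] [Module k V]
  [FiniteDimensional k V] {f : End k V →ₗ[k] k}

lemma trace_mul_eq_zero_of_mem_tangentSpan {G : Subgroup (End k V)ˣ} {h : (End k V)ˣ}
    (hh : h ∈ G) (hfh : f h ≠ 0)
    (hmax : ∀ g ∈ G, f g ≠ 0 →
      Fintype.card (g : End k V).Eigenvalues ≤ Fintype.card (h : End k V).Eigenvalues)
    {N : End k V} (hN : N ∈ Algebra.adjoin k {(h : End k V)}) (hnil : IsNilpotent N)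
    {M : End k V} (hM : M ∈ tangentSpan k G) : LinearMap.trace k V (N * M) = 0 := by
  have hNh : N * ↑h⁻¹ ∈ Algebra.adjoin k {(h : End k V)} :=
    mul_mem hN (val_inv_mem (Algebra.self_mem_adjoin_singleton k _))
  obtain ⟨p, hp⟩ := Algebra.adjoin_singleton_eq_range_aeval k (h : End k V) ▸ hNh
  replace hp : aeval (h : End k V) p = N * ↑h⁻¹ := hp
  have hpnil : IsNilpotent (aeval (h : End k V) p) := by
    rw [hp]
    exact (Algebra.commute_of_mem_adjoin_self hN).symm.units_inv_right.isNilpotent_mul_right hnil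
  suffices tangentSpan k G ≤ LinearMap.ker (LinearMap.trace k V ∘ₗ LinearMap.mulLeft k N) from
    this hM
  refine Submodule.span_le.2 ?_
  rintro _ ⟨c, ⟨hc, hc0⟩, rfl⟩
  let d : (End k V)[X] := C (h : End k V) * c
  have hd0 : d.coeff 0 = h := by simp [d, hc0]
  have hcard : {t : k | Fintype.card (evalAt t d).Eigenvalues ≤
      Fintype.card (h : End k V).Eigenvalues}.Infinite := by
    refine (infinite_setOf_apply_evalAt_ne_zero (by rwa [hd0])).mono fun t ht ↦ ?_
    have hd : evalAt t d = ↑(h * evalUnitsAt t c) := by simp [d]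
    rw [Set.mem_ofPred_eq, hd] at ht ⊢
    exact hmax _ (mul_mem hh (mem_polyCurves.1 hc t)) ht
  have := trace_aeval_mul_coeff_one_eq_zero (c := d) (p := p) (by rwa [hd0]) (by rwa [hd0])
  simpa [hd0, d, hp, mul_assoc] using this

variable {Γ : Subgroup (End k V)ˣ}

lemma isSemisimple_of_card_eigenvalues_le
    (hΓ : IsIrreducibleRep ((Units.coeHom (End k V)).comp Γ.subtype))
    {h : (End k V)ˣ} (hh : h ∈ Γ) (hfh : f h ≠ 0)
    (hmax : ∀ g ∈ Γ, f g ≠ 0 →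
      Fintype.card (g : End k V).Eigenvalues ≤ Fintype.card (h : End k V).Eigenvalues) :
    (h : End k V).IsSemisimple := by
  obtain ⟨s, u, rfl, hsu, hs, hu, hadj⟩ := exists_eq_mul_isSemisimple_unipotent h
  obtain ⟨c, hc⟩ := exists_units_evalAt_natCast_eq_pow (k := k) hu
  have hc' (n : ℕ) : evalAt (n : k) (c : (End k V)[X]) = (1 + (u - 1 : End k V)) ^ n := by
    rw [hc, add_sub_cancel]
  have hc0 : (c : (End k V)[X]).coeff 0 = 1 := by simpa using hc 0
  let G := zariskiClosure k Γ
  have hle : Γ ≤ G := le_zariskiClosure Γ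
  have htangent : (c : (End k V)[X]).coeff 1 ∈ tangentSpan k G :=
    Submodule.subset_span ⟨c, ⟨mem_polyCurves_zariskiClosure hsu hs hh hc, hc0⟩, rfl⟩
  have hnil := isNilpotent_coeff_one hu hc'
  have hNh : (c : (End k V)[X]).coeff 1 ∈ Algebra.adjoin k {(↑(s * u) : End k V)} :=
    Algebra.adjoin_le (Set.singleton_subset_iff.2 hadj) (coeff_one_mem_adjoin hc')
  have hmaxG (x) (hx : x ∈ G) (hfx : f x ≠ 0) :=
    card_eigenvalues_le_of_mem_zariskiClosure (val_mem_regularMaps f) hmax hx hfx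
  have hN : (c : (End k V)[X]).coeff 1 = 0 :=
    eq_zero_of_isNilpotent_of_mem_traceRadical hΓ (L := tangentLie k G)
      (fun g x hx ↦ conj_mem_tangentSpan (hle g.2) hx)
      ⟨htangent, fun M hM ↦
        trace_mul_eq_zero_of_mem_tangentSpan (hle hh) hfh hmaxG hNh hnil hM⟩ hnil
  have hu1 : (u : End k V) = 1 := sub_eq_zero.1 (eq_zero_of_coeff_one_eq_zero hu hc' hN)
  rwa [Units.val_mul, hu1, mul_one]

lemma apply_eq_zero_of_forall_isSemisimple
    (hΓ : IsIrreducibleRep ((Units.coeHom (End k V)).comp Γ.subtype))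
    (hf : ∀ g ∈ Γ, (g : End k V).IsSemisimple → f g = 0) {g : (End k V)ˣ} (hg : g ∈ Γ) :
    f g = 0 := by
  by_contra hfg
  let S : Set ℕ :=
    (fun g : (End k V)ˣ ↦ Fintype.card (g : End k V).Eigenvalues) '' {g | g ∈ Γ ∧ f g ≠ 0}
  have hS : BddAbove S :=
    ⟨finrank k V, by rintro _ ⟨g, -, rfl⟩; exact card_eigenvalues_le_finrank _⟩
  obtain ⟨_, ⟨h, ⟨hh, hfh⟩, rfl⟩, hmax⟩ := hS.exists_isGreatest_of_nonempty ⟨_, g, ⟨hg, hfg⟩, rfl⟩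
  exact hfh (hf h hh (isSemisimple_of_card_eigenvalues_le hΓ hh hfh fun g hg hfg ↦
    hmax ⟨g, ⟨hg, hfg⟩, rfl⟩))

end MaximalEigenvalueCount

end WeaklyAdequate

/-- **Corollary.** Let `k` be algebraically closed of characteristic `0`, `V` a
finite-dimensional `k`-vector space and `Γ ≤ GL(V)` an irreducible subgroup.  Then
`End_k(V)` is spanned by the semisimple (diagonalizable) elements of `Γ`. -/
theorem weaklyAdequate_char_zero
    (k : Type*) [Field k] [IsAlgClosed k] [CharZero k]
    (V : Type*) [AddCommGroup V] [Module k V] [FiniteDimensional k V]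
    (Γ : Subgroup (Module.End k V)ˣ)
    (hirr : IsIrreducibleRep ((Units.coeHom (Module.End k V)).comp Γ.subtype)) :
    WeaklyAdequate ((Units.coeHom (Module.End k V)).comp Γ.subtype) := by
  set ρ := (Units.coeHom (Module.End k V)).comp Γ.subtype
  by_contra hne
  obtain ⟨x, hx⟩ := SetLike.exists_not_mem_of_ne_top _ hne
  obtain ⟨f, hfx, hf⟩ := Submodule.exists_le_ker_of_notMem hx
  have hss (g) (hg : g ∈ Γ) (hs : (g : Module.End k V).IsSemisimple) : f g = 0 :=
    hf (Submodule.subset_span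
      ⟨⟨g, hg⟩, PerfectField.separable_iff_squarefree.2 hs.minpoly_squarefree, rfl⟩)
  have hle : Submodule.span k (Set.range ρ) ≤ LinearMap.ker f := by
    refine Submodule.span_le.2 (Set.range_subset_iff.2 fun g ↦ ?_)
    exact WeaklyAdequate.apply_eq_zero_of_forall_isSemisimple hirr hss g.2
  rw [WeaklyAdequate.span_range_eq_top hirr] at hle
  exact hfx (hle Submodule.mem_top)
end

section
/- Let k be a field of characteristic p > 0, let G be a finite group with a subgroup K, let W be a nonzero finite-dimensional kK-module, and let V = Ind_K^G(W) be the induced kG-module, with representation ρ: G → GL(V). Assume ρ is faithful. If some left coset gK of K in G contains no p'-elements (elements of order prime to p), then (G,V) is not weakly adequate; that is, the operators ρ(x), for x ∈ G with ρ(x) semisimple, do not span End_k(V). -/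
/-!
Split `V = Ind_K^G W` along the left cosets of `K`, and look at the `(gK, K)` block of an
operator on `V`. The operator of `x ∈ G` has nonzero `(gK, K)` block only if `x ∈ gK`, while that
of `g` is the identity of `W`; so operators spanning `End_k V` must include one coming from some
`x ∈ gK`. If such an `x` has order `p ^ a * m` with `p ∤ m` and acts semisimply, then the squarefree
minimal polynomial of its operator divides `X ^ (p ^ a * m) - 1 = (X ^ m - 1) ^ p ^ a`, hence
`X ^ m - 1`, so the `p`-part of `x` acts trivially. The kernel of `V` is contained in `K` (compare
blocks with the identity operator), hence the `p'`-part of `x` also lies in `gK`.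
-/

open scoped TensorProduct Pointwise

/-- The induced module `Ind_K^G W = kG ⊗_{kK} W`, realized concretely as the space of
functions `f : G → W` satisfying `f (g * x) = ρW x⁻¹ (f g)` for all `x ∈ K` (for a subgroup
`K` of finite index, in particular for finite `G`, this realizes `kG ⊗_{kK} W`). -/
def inducedSubmodule {k G W : Type*} [Field k] [Group G] [AddCommGroup W] [Module k W]
    (K : Subgroup G) (ρW : Representation k K W) : Submodule k (G → W) where
  carrier := {f | ∀ (g : G) (x : K), f (g * x) = ρW x⁻¹ (f g)}
  add_mem' := by
    intro a b ha hb g x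
    simp [ha g x, hb g x]
  zero_mem' := by intro g x; simp
  smul_mem' := by
    intro c a ha g x
    simp [ha g x]

/-- The representation of `G` on the induced module `Ind_K^G W`, given by left translation:
`(g • f) h = f (g⁻¹ * h)`. -/
def inducedRep {k G W : Type*} [Field k] [Group G] [AddCommGroup W] [Module k W]
    (K : Subgroup G) (ρW : Representation k K W) :
    Representation k G ↥(inducedSubmodule K ρW) where
  toFun g := (LinearMap.funLeft k W (fun h => g⁻¹ * h)).restrict (fun f hf => by
    intro h x
    simpa [mul_assoc] using hf (g⁻¹ * h) x)
  map_one' := by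
    ext f
    simp [LinearMap.restrict_apply, LinearMap.funLeft]
  map_mul' g₁ g₂ := by
    ext f
    simp [LinearMap.restrict_apply, LinearMap.funLeft, mul_assoc]

open Polynomial in
theorem pow_eq_one_of_squarefree_minpoly {k A : Type*} [Field k] [Ring A] [Algebra k A]
    (q : ℕ) [ExpChar k q] {a : A} (ha : Squarefree (minpoly k a)) {m n : ℕ}
    (h : a ^ (q ^ n * m) = 1) : a ^ m = 1 := by
  have dvd_frobenius : minpoly k a ∣ (X ^ m - 1 : k[X]) ^ q ^ n := by
    rw [sub_pow_expChar_pow, one_pow, ← pow_mul, mul_comm]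
    exact minpoly.dvd k a (by simp [h])
  have dvd : minpoly k a ∣ X ^ m - 1 := ha.isRadical _ _ dvd_frobenius
  simpa [sub_eq_zero] using (minpoly.dvd_iff (p := (X ^ m - 1 : k[X]))).mp dvd

theorem exists_mem_smul_pow_eq_one {G : Type*} [Group G] {K : Subgroup G} {x : G} {m n : ℕ}
    (hmn : m.Coprime n) (hx : x ^ (n * m) = 1) (hxK : x ^ m ∈ K) :
    ∃ y ∈ x • (K : Set G), y ^ m = 1 := by
  have bezout : (n * m.gcdB n : ℤ) = 1 + m * -m.gcdA n := by
    have := Nat.gcd_eq_gcd_ab m n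
    rw [hmn.gcd_eq_one] at this
    push_cast at this
    linarith
  refine ⟨x ^ (n * m.gcdB n : ℤ), ?_, ?_⟩
  · rw [bezout, zpow_add, zpow_one, zpow_mul, zpow_natCast]
    exact Set.smul_mem_smul_set (K.zpow_mem hxK _)
  · calc (x ^ (n * m.gcdB n : ℤ)) ^ m = (x ^ (n * m)) ^ m.gcdB n := by
          rw [← zpow_natCast, ← zpow_natCast, ← zpow_mul, ← zpow_mul]
          push_cast
          ring_nf
      _ = 1 := by rw [hx, one_zpow]

section InducedRep

variable {k G W : Type*} [Field k] [Group G] [AddCommGroup W] [Module k W]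
  (K : Subgroup G) (ρW : Representation k K W)

open Classical in
/-- The canonical embedding `w ↦ 1 ⊗ w` of `W` into `Ind_K^G W`. In the realization by functions,
its image consists of the functions supported on `K`, and `w` is the value at `1`. -/
noncomputable def inducedEmbedding : W →ₗ[k] inducedSubmodule K ρW where
  toFun w := ⟨fun h ↦ if hh : h ∈ K then ρW ⟨h, hh⟩⁻¹ w else 0, fun h x ↦ by
    by_cases hh : h ∈ K
    · have hx : h * x ∈ K := K.mul_mem hh x.2
      have hmul : (⟨h * x, hx⟩ : K) = ⟨h, hh⟩ * x := rfl
      simp only [dif_pos hh, dif_pos hx, hmul, mul_inv_rev, map_mul, Module.End.mul_apply]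
    · have hx : h * x ∉ K := mt (K.mul_mem_cancel_right x.2).mp hh
      simp only [dif_neg hh, dif_neg hx, map_zero]⟩
  map_add' v w := by
    ext h
    by_cases hh : h ∈ K <;> simp [hh]
  map_smul' c w := by
    ext h
    by_cases hh : h ∈ K <;> simp [hh]

theorem inducedEmbedding_apply_one (w : W) : (inducedEmbedding K ρW w : G → W) 1 = w := by
  have hone : (⟨1, K.one_mem⟩ : K) = 1 := rfl
  simp [inducedEmbedding, K.one_mem, hone]

theorem inducedEmbedding_apply_of_notMem (w : W) {h : G} (hh : h ∉ K) :
    (inducedEmbedding K ρW w : G → W) h = 0 :=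
  dif_neg hh

/-- The `(gK, K)` block of an endomorphism of `Ind_K^G W`, that is, its component `1 ⊗ W → g ⊗ W`
with respect to the decomposition along left cosets. Evaluating functions at `g` identifies
`g ⊗ W` with `W`. -/
noncomputable def cosetBlock (g : G) :
    Module.End k (inducedSubmodule K ρW) →ₗ[k] Module.End k W :=
  LinearMap.compRight k (LinearMap.proj g ∘ₗ (inducedSubmodule K ρW).subtype) ∘ₗ
    LinearMap.lcomp k _ (inducedEmbedding K ρW)

theorem cosetBlock_inducedRep_apply (g x : G) (w : W) :
    cosetBlock K ρW g (inducedRep K ρW x) w = (inducedEmbedding K ρW w : G → W) (x⁻¹ * g) :=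
  rfl

theorem cosetBlock_inducedRep_self (g : G) : cosetBlock K ρW g (inducedRep K ρW g) = 1 := by
  ext w
  rw [cosetBlock_inducedRep_apply, inv_mul_cancel, inducedEmbedding_apply_one,
    Module.End.one_apply]

theorem cosetBlock_inducedRep_of_notMem {g x : G} (hx : x ∉ g • (K : Set G)) :
    cosetBlock K ρW g (inducedRep K ρW x) = 0 := by
  have hxg : x⁻¹ * g ∉ K := by
    rw [Set.mem_smul_set_iff_inv_smul_mem, smul_eq_mul, SetLike.mem_coe] at hx
    rwa [← K.inv_mem_iff, mul_inv_rev, inv_inv]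
  ext w
  rw [cosetBlock_inducedRep_apply, inducedEmbedding_apply_of_notMem K ρW w hxg,
    LinearMap.zero_apply]

variable {K ρW} [Nontrivial W]

theorem mem_of_inducedRep_eq_one {x : G} (hx : inducedRep K ρW x = 1) : x ∈ K := by
  by_contra hxK
  have one_notMem : (1 : G) ∉ x • (K : Set G) := by
    simpa [Set.mem_smul_set_iff_inv_smul_mem] using hxK
  apply one_ne_zero (α := Module.End k W)
  rw [← cosetBlock_inducedRep_self K ρW x, hx, ← map_one (inducedRep K ρW),
    cosetBlock_inducedRep_of_notMem K ρW one_notMem]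

theorem WeaklyAdequate.exists_mem_smul_isSemisimpleEnd
    (h : WeaklyAdequate (inducedRep K ρW)) (g : G) :
    ∃ x ∈ g • (K : Set G), IsSemisimpleEnd (inducedRep K ρW x) := by
  by_contra! hg
  have span_le_ker : Submodule.span k
      {f | ∃ x : G, IsSemisimpleEnd (inducedRep K ρW x) ∧ inducedRep K ρW x = f} ≤
      LinearMap.ker (cosetBlock K ρW g) := by
    rw [Submodule.span_le]
    rintro _ ⟨x, hx, rfl⟩
    exact cosetBlock_inducedRep_of_notMem K ρW fun hxg ↦ hg x hxg hx
  have block_eq_zero : cosetBlock K ρW g (inducedRep K ρW g) = 0 :=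
    span_le_ker (h.ge Submodule.mem_top)
  exact one_ne_zero ((cosetBlock_inducedRep_self K ρW g).symm.trans block_eq_zero)

theorem IsSemisimpleEnd.exists_mem_smul_coprime_orderOf {p : ℕ} (hp : p.Prime) [CharP k p]
    {x : G} (hx : IsSemisimpleEnd (inducedRep K ρW x)) (hfin : IsOfFinOrder x) :
    ∃ y ∈ x • (K : Set G), (orderOf y).Coprime p := by
  have : ExpChar k p := .prime hp
  set m := ordCompl[p] (orderOf x)
  have hmp : m.Coprime p := (Nat.coprime_ordCompl hp hfin.orderOf_pos.ne').symm
  have hxm : x ^ (ordProj[p] (orderOf x) * m) = 1 := by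
    rw [Nat.ordProj_mul_ordCompl_eq_self, pow_orderOf_eq_one]
  have rho_pow : inducedRep K ρW x ^ m = 1 :=
    pow_eq_one_of_squarefree_minpoly p (Polynomial.Separable.squarefree hx) (by
      rw [← map_pow, hxm, map_one])
  have hxK : x ^ m ∈ K := mem_of_inducedRep_eq_one (by rw [map_pow, rho_pow])
  obtain ⟨y, hy, hym⟩ := exists_mem_smul_pow_eq_one (hmp.pow_right _) hxm hxK
  exact ⟨y, hy, hmp.coprime_dvd_left (orderOf_dvd_of_pow_eq_one hym)⟩

theorem inducedRep_not_weaklyAdequate_general {p : ℕ} (hp : p.Prime) [CharP k p] {g : G}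
    (hfin : ∀ x ∈ g • (K : Set G), IsOfFinOrder x)
    (hg : ∀ x ∈ g • (K : Set G), ¬ Nat.Coprime (orderOf x) p) :
    ¬ WeaklyAdequate (inducedRep K ρW) := by
  intro hρ
  obtain ⟨x, hxg, hx⟩ := hρ.exists_mem_smul_isSemisimpleEnd g
  obtain ⟨y, hyx, hy⟩ := hx.exists_mem_smul_coprime_orderOf hp (hfin x hxg)
  have coset_eq : x • (K : Set G) = g • (K : Set G) := by
    rw [Set.mem_smul_set_iff_inv_smul_mem] at hxg
    exact ((leftCoset_eq_iff K).mpr hxg).symm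
  exact hg y (coset_eq ▸ hyx) hy

end InducedRep

/-- **Lemma.** Let `k` be a field of characteristic `p > 0`, `G` a finite group with a
subgroup `K`, `W` a nonzero finite-dimensional `kK`-module, and `V = Ind_K^G W` the induced
`kG`-module, assumed faithful.  If some left coset `gK` contains no `p'`-elements, then
`(G, V)` is not weakly adequate. -/
theorem inducedRep_not_weaklyAdequate
    (p : ℕ) (hp : p.Prime) (k : Type*) [Field k] [CharP k p]
    (G : Type*) [Group G] [Finite G] (K : Subgroup G)
    (W : Type*) [AddCommGroup W] [Module k W] [FiniteDimensional k W] [Nontrivial W]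
    (ρW : Representation k K W)
    (hfaith : Function.Injective (inducedRep K ρW))
    (g : G) (hg : ∀ x ∈ g • (K : Set G), ¬ Nat.Coprime (orderOf x) p) :
    ¬ WeaklyAdequate (inducedRep K ρW) :=
  inducedRep_not_weaklyAdequate_general hp (fun x _ ↦ isOfFinOrder_of_finite x) hg
end
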